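/- Let ρ_i = C / (log(i+1))^s for constants C > 0 and s > 1/2, and define M(ε) = max{i : ρ_i ≥ ε} (with M(ε) = 0 if no such i exists). Then the entropy integral ∫₀^∞ √(log(M(ε)+1)) dε is finite. -/

import Mathlib

open MeasureTheory Set

/-!
If `i = M ε` is the last index with `ε ≤ ρ i ≤ C / (log (i + 1)) ^ s`, then inverting the bound
gives `(log (M ε + 1)) ^ p ≤ (C / ε) ^ (p / s)`, which is integrable near `0` because `p / s < 1`.
Since `log (i + 1) ≥ log 2`, such an index only exists for `ε ≤ C / (log 2) ^ s`, so the integrand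
has bounded support. The entropy integral is the case `p = 1 / 2`.
-/

section RpowBounds

variable {C s ε L : ℝ}

lemma le_div_rpow_of_le_div_rpow {a : ℝ} (hs : 0 ≤ s) (hε : 0 < ε) (ha : 0 < a)
    (haL : a ≤ L) (h : ε ≤ C / L ^ s) : ε ≤ C / a ^ s := by
  have hL : 0 < L := ha.trans_le haL
  rw [le_div_comm₀ hε (by positivity)] at h ⊢
  exact (Real.rpow_le_rpow ha.le haL hs).trans h

lemma rpow_le_mul_rpow_of_le_div_rpow {p : ℝ} (hs : 0 < s) (hp : 0 ≤ p) (hε : 0 < ε) (hL : 0 < L)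
    (h : ε ≤ C / L ^ s) : L ^ p ≤ C ^ (p / s) * ε ^ (-(p / s)) := by
  have hLs : 0 < L ^ s := by positivity
  have hC : 0 < C := (div_pos_iff_of_pos_right hLs).mp (hε.trans_le h)
  calc L ^ p = (L ^ s) ^ (p / s) := by rw [← Real.rpow_mul hL.le, mul_div_cancel₀ p hs.ne']
    _ ≤ (C / ε) ^ (p / s) := by
        gcongr
        exact (le_div_comm₀ hε hLs).mp h
    _ = C ^ (p / s) * ε ^ (-(p / s)) := by
        rw [Real.div_rpow hC.le hε.le, Real.rpow_neg hε.le, div_eq_mul_inv]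

end RpowBounds

lemma log_two_le_log_natCast_add_one {n : ℕ} (hn : n ≠ 0) : Real.log 2 ≤ Real.log (n + 1) := by
  have h2 : (2 : ℝ) ≤ n + 1 := by exact_mod_cast Nat.succ_le_succ (Nat.one_le_iff_ne_zero.mpr hn)
  exact Real.log_le_log two_pos h2

lemma integrableOn_Ioi_zero_of_norm_le_mul_rpow {E : Type*} [NormedAddCommGroup E] {f : ℝ → E}
    {K q r : ℝ} (hq : -1 < q) (hf : AEStronglyMeasurable f (volume.restrict (Ioc 0 r)))
    (hle : ∀ x ∈ Ioc 0 r, ‖f x‖ ≤ K * x ^ q) (hzero : ∀ x, 0 < x → r < x → f x = 0) :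
    IntegrableOn f (Ioi 0) := by
  have hpow : IntegrableOn (fun x => K * x ^ q) (Ioc 0 r) :=
    (intervalIntegral.intervalIntegrable_rpow' hq).1.const_mul K
  have hIoc : IntegrableOn f (Ioc 0 r) :=
    Integrable.mono' hpow hf <| ae_restrict_of_forall_mem measurableSet_Ioc hle
  exact hIoc.of_forall_sdiff_eq_zero measurableSet_Ioi fun x ⟨hx, hxr⟩ =>
    hzero x hx <| not_le.mp fun hxle => hxr ⟨hx, hxle⟩

/-- `M ε` is the last index `i ≥ 1` of the sequence `ρ₁, ρ₂, …` with `ε ≤ ρ i`, and `0` if there is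
none, for every threshold `ε > 0`. Adjoining `0` to the set of indices encodes the second case; the
value `ρ 0` is ignored. -/
def IsLastIndexGE (ρ : ℕ → ℝ) (M : ℝ → ℕ) : Prop :=
  ∀ ε : ℝ, 0 < ε → IsGreatest (insert 0 {i | 1 ≤ i ∧ ε ≤ ρ i}) (M ε)

namespace IsLastIndexGE

variable {ρ : ℕ → ℝ} {M : ℝ → ℕ}

lemma of_le_iff (h : ∀ ε : ℝ, 0 < ε → ∀ i : ℕ, 1 ≤ i → (ε ≤ ρ i ↔ i ≤ M ε)) :
    IsLastIndexGE ρ M := by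
  intro ε hε
  constructor
  · rcases Nat.eq_zero_or_pos (M ε) with hM | hM
    · exact Or.inl hM
    · exact Or.inr ⟨hM, (h ε hε _ hM).mpr le_rfl⟩
  · rintro i (rfl | ⟨hi, hεi⟩)
    · exact Nat.zero_le _
    · exact (h ε hε i hi).mp hεi

lemma antitoneOn (h : IsLastIndexGE ρ M) : AntitoneOn M (Ioi 0) := fun x hx y hy hxy =>
  (h y hy).mono (h x hx) <| insert_subset_insert fun _ hi => ⟨hi.1, hxy.trans hi.2⟩

lemma le_apply (h : IsLastIndexGE ρ M) {ε : ℝ} (hε : 0 < ε) (hM : M ε ≠ 0) : ε ≤ ρ (M ε) :=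
  ((h ε hε).1.resolve_left hM).2

lemma antitoneOn_rpow_log (h : IsLastIndexGE ρ M) {p : ℝ} (hp : 0 ≤ p) :
    AntitoneOn (fun ε => Real.log (M ε + 1) ^ p) (Ioi 0) := by
  intro x hx y hy hxy
  have hM : M y ≤ M x := h.antitoneOn hx hy hxy
  have hlog : 0 ≤ Real.log (M y + 1) := Real.log_nonneg (by simp)
  dsimp only
  gcongr

section LogBounds

variable {C s ε : ℝ}

lemma le_div_rpow_log (h : IsLastIndexGE ρ M)
    (hρ : ∀ i : ℕ, 1 ≤ i → ρ i ≤ C / Real.log (i + 1) ^ s) (hε : 0 < ε) (hM : M ε ≠ 0) :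
    ε ≤ C / Real.log (M ε + 1) ^ s :=
  (h.le_apply hε hM).trans (hρ _ (Nat.one_le_iff_ne_zero.mpr hM))

lemma eq_zero_of_div_rpow_log_two_lt (h : IsLastIndexGE ρ M)
    (hρ : ∀ i : ℕ, 1 ≤ i → ρ i ≤ C / Real.log (i + 1) ^ s) (hs : 0 ≤ s) (hε : 0 < ε)
    (hlt : C / Real.log 2 ^ s < ε) : M ε = 0 := by
  by_contra hM
  exact hlt.not_ge <| le_div_rpow_of_le_div_rpow hs hε (Real.log_pos one_lt_two)
    (log_two_le_log_natCast_add_one hM) (h.le_div_rpow_log hρ hε hM)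

lemma rpow_log_le_mul_rpow (h : IsLastIndexGE ρ M)
    (hρ : ∀ i : ℕ, 1 ≤ i → ρ i ≤ C / Real.log (i + 1) ^ s) (hs : 0 < s) {p : ℝ} (hp : 0 < p)
    (hC : 0 ≤ C) (hε : 0 < ε) :
    Real.log (M ε + 1) ^ p ≤ C ^ (p / s) * ε ^ (-(p / s)) := by
  by_cases hM : M ε = 0
  · have hzero : Real.log (M ε + 1) ^ p = 0 := by simp [hM, hp.ne']
    rw [hzero]
    positivity
  · have hlog : 0 < Real.log (M ε + 1) :=
      (Real.log_pos one_lt_two).trans_le (log_two_le_log_natCast_add_one hM)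
    exact rpow_le_mul_rpow_of_le_div_rpow hs hp.le hε hlog (h.le_div_rpow_log hρ hε hM)

end LogBounds

end IsLastIndexGE

theorem stmt3_general {C s p : ℝ} (hp : 0 < p) (hps : p < s) {ρ : ℕ → ℝ}
    (hρ : ∀ i : ℕ, 1 ≤ i → ρ i ≤ C / Real.log (i + 1) ^ s) {M : ℝ → ℕ} (hM : IsLastIndexGE ρ M) :
    IntegrableOn (fun ε => Real.log (M ε + 1) ^ p) (Ioi 0) := by
  have hs : 0 < s := hp.trans hps
  have hq : -1 < -(p / s) := neg_lt_neg ((div_lt_one hs).mpr hps)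
  have hmeas := aemeasurable_restrict_of_antitoneOn (μ := volume) measurableSet_Ioi
    (hM.antitoneOn_rpow_log hp.le)
  refine integrableOn_Ioi_zero_of_norm_le_mul_rpow (K := C ^ (p / s)) (r := C / Real.log 2 ^ s) hq
    (hmeas.mono_set Ioc_subset_Ioi_self).aestronglyMeasurable (fun ε ⟨hε, hεr⟩ => ?_)
    (fun ε hε hεr => ?_)
  · have hC : 0 < C := (div_pos_iff_of_pos_right (by positivity)).mp (hε.trans_le hεr)
    have hlog : 0 ≤ Real.log (M ε + 1) := Real.log_nonneg (by simp)
    rw [Real.norm_of_nonneg (by positivity)]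
    exact hM.rpow_log_le_mul_rpow hρ hs hp hC.le hε
  · simp [hM.eq_zero_of_div_rpow_log_two_lt hρ hs.le hε hεr, hp.ne']

/-- For `ρ_i = C/(log(i+1))^s` with `C > 0`, `s > 1/2`, and `M(ε) = max{i ≥ 1 : ρ_i ≥ ε}`
(`M(ε) = 0` if no such `i`), the entropy integral `∫₀^∞ √(log(M(ε)+1)) dε` is finite. -/
theorem stmt3 (C s : ℝ) (hC : 0 < C) (hs : 1 / 2 < s)
    (ρ : ℕ → ℝ) (hρ : ∀ i : ℕ, 1 ≤ i → ρ i = C / (Real.log (i + 1)) ^ s)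
    (M : ℝ → ℕ)
    (hM : ∀ ε : ℝ, 0 < ε → ∀ i : ℕ, 1 ≤ i → (ε ≤ ρ i ↔ i ≤ M ε)) :
    IntegrableOn (fun ε : ℝ => Real.sqrt (Real.log ((M ε : ℝ) + 1))) (Ioi 0) := by
  simp only [Real.sqrt_eq_rpow]
  exact stmt3_general one_half_pos hs (fun i hi => (hρ i hi).le) (.of_le_iff hM)
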